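/- (Theorem: bracket form of the derivation deviation over the tribraces) In the endomorphism operad of a K-module L, the derivation deviation of ∂ over the tribraces, (dev_{braces} ∂)(h ⊗ f ⊗ g) := ∂{h, f, g} − {h, f, ∂g} − (−1)^{|g|} {h, ∂f, g} − (−1)^{|g|+|f|} {∂h, f, g}, satisfies (−1)^{deg g} (dev_{braces} ∂)(h ⊗ f ⊗ g) = [h, f] ⌣ g + (−1)^{|h|·deg f} f ⌣ [h, g] − [h, f ⌣ g] for all homogeneous h, f, g; this is the graded Leibniz rule up to the derivation deviation. -/

import Mathlib

/-!
Write `x{a, b}` for the tribraces and `x{a}` for the total composition. Since `f ⌣ g` is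
`(-1)^{deg f} μ{f, g}`, both sides of the claimed identity are built from braces, and it follows
from four instances of the brace relations.

* `tcomp_triFn`: `h{f, g}{μ}` is the sum of `h{f, g{μ}}`, `± h{f{μ}, g}` and the terms in which `f`,
  `g`, `μ` occupy three different slots of `h` (`tripleInsert`).
* `triFn_tcomp`: `h{μ}{f, g}` is the sum of the same triple insertions, of `h{μ{f}, g}` and
  `h{f, μ{g}}`, and of `h{μ{f, g}}`.
* `triFn_tcomp_binary`: `μ{h}{f, g}` is the sum of `μ{h{f, g}}`, `μ{h{f}, g}` and `± μ{f, h{g}}`;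
  there are no triple insertions, because `μ` has two slots only.
* `tcomp_binary`: `μ{f, g}{h}` is the sum of `± μ{f{h}, g}` and `μ{f, g{h}}`.

In the derivation deviation everything cancels except `h{μ{f, g}}`, `μ{h{f}, g}` and `μ{f, h{g}}`;
the fourth relation turns these into the three bracket terms on the right-hand side. The signs are
compared by running through the parities of the three arities.

The relations themselves come from the sequential and parallel composition laws `pcomp_seq` and
`pcomp_par`, which need of the operations only that they are additive in the slot used (`AddAt`) and
depend on finitely many entries (`DepOn`), and from splitting the index set of the positions
(`sum_positions_split`).
-/

variable {K : Type*} [CommRing K] {L : Type*} [AddCommGroup L] [Module K L]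

/-- `(-1)^z` for an integer exponent `z`. -/
def sgn (z : ℤ) : ℤ := (-1) ^ z.natAbs

/-- The underlying function (on `ℕ`-indexed families of elements of `L`) of an
`n`-multilinear map `f ∈ Eⁿ`; equality of such functions is equivalent to equality
of the multilinear maps. -/
def toFn {n : ℕ} (f : MultilinearMap K (fun _ : Fin n => L) L) : (ℕ → L) → L :=
  fun x => f fun a => x a.val

/-- Partial composition `F ∘ᵢ G`, where `n` is the arity (degree) of `G`:
`(f ∘ᵢ g)(x_0, …) = (-1)^{i(n-1)} f(x_0, …, x_{i-1}, g(x_i, …, x_{i+n-1}), x_{i+n}, …)`. -/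
def pcomp (i n : ℕ) (F G : (ℕ → L) → L) : (ℕ → L) → L :=
  fun x => sgn ((i : ℤ) * ((n : ℤ) - 1)) •
    F fun k => if k < i then x k else if k = i then G (fun j => x (i + j)) else x (k + n - 1)

/-- Total composition `F • G := Σ_{i=0}^{m-1} F ∘ᵢ G`, where `m, n` are the arities of `F, G`. -/
def tcomp (m n : ℕ) (F G : (ℕ → L) → L) : (ℕ → L) → L :=
  ∑ i ∈ Finset.range m, pcomp i n F G

/-- Gerstenhaber bracket `[F, G] := F • G - (-1)^{|F||G|} G • F` for arities `m, n` of `F, G`. -/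
def gbr (m n : ℕ) (F G : (ℕ → L) → L) : (ℕ → L) → L :=
  tcomp m n F G - sgn (((m : ℤ) - 1) * ((n : ℤ) - 1)) • tcomp n m G F

/-- Cup product `F ⌣ G := (-1)^m (Mu ∘₀ F) ∘ₘ G`, where `m, n` are the arities of `F, G`. -/
def cupFn (m n : ℕ) (Mu F G : (ℕ → L) → L) : (ℕ → L) → L :=
  sgn (m : ℤ) • pcomp m n (pcomp 0 m Mu F) G

/-- Gerstenhaber tribraces `{H, F, G} := Σ_{i=0}^{|H|-1} Σ_{j=i+m}^{|F|+|H|} (H ∘ᵢ F) ∘ⱼ G`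
for arities `p, m, n` of `H, F, G`. -/
def triFn (p m n : ℕ) (H F G : (ℕ → L) → L) : (ℕ → L) → L :=
  ∑ i ∈ Finset.range (p - 1), ∑ j ∈ Finset.Icc (i + m) (m + p - 2), pcomp j n (pcomp i m H F) G

open Finset

/-! ### Signs -/

theorem sgn_eq_of_even_sub {a b : ℤ} (h : Even (a - b)) : sgn a = sgn b := by
  unfold sgn
  rw [neg_one_pow_eq_pow_mod_two, neg_one_pow_eq_pow_mod_two (n := b.natAbs)]
  congr 1
  obtain ⟨c, hc⟩ := h
  omega

theorem sgn_add (a b : ℤ) : sgn (a + b) = sgn a * sgn b := by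
  unfold sgn
  rw [← pow_add, neg_one_pow_eq_pow_mod_two, neg_one_pow_eq_pow_mod_two (n := a.natAbs + b.natAbs)]
  congr 1
  omega

theorem sgn_of_even {a : ℤ} (h : Even a) : sgn a = 1 :=
  (sgn_eq_of_even_sub (b := 0) (by simpa using h)).trans rfl

theorem sgn_of_odd {a : ℤ} (h : Odd a) : sgn a = -1 :=
  (sgn_eq_of_even_sub (b := 1) (h.sub_odd odd_one)).trans rfl

theorem sgn_mul_self (a : ℤ) : sgn a * sgn a = 1 := by
  rw [← sgn_add]
  exact sgn_of_even ⟨a, rfl⟩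

theorem sgn_eq_ite (z : ℤ) : sgn z = if Even z then 1 else -1 := by
  split_ifs with h
  · exact sgn_of_even h
  · exact sgn_of_odd (Int.not_even_iff_odd.mp h)

/-! ### Arity and additivity -/

section

variable {M : Type*} [AddCommGroup M]

/-- `F` depends only on the first `n` entries of its argument, i.e. has arity at most `n`. -/
def DepOn (n : ℕ) (F : (ℕ → M) → M) : Prop :=
  ∀ x y : ℕ → M, (∀ k < n, x k = y k) → F x = F y

/-- `F` is additive in the slot `i`. -/
def AddAt (i : ℕ) (F : (ℕ → M) → M) : Prop :=
  ∀ (x : ℕ → M) (a b : M), F (Function.update x i (a + b)) =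
    F (Function.update x i a) + F (Function.update x i b)

/-- The family fed to `F` by `pcomp i n F G`, with the value of `G` replaced by `a`. -/
def ins (i n : ℕ) (x : ℕ → M) (a : M) : ℕ → M :=
  fun k => if k < i then x k else if k = i then a else x (k + n - 1)

theorem ins_eq_update (i n : ℕ) (x : ℕ → M) (a : M) :
    ins i n x a = Function.update (ins i n x 0) i a := by
  funext k
  by_cases hk : k = i
  · subst hk; simp [ins]
  · simp [ins, hk]

theorem pcomp_apply (i n : ℕ) (F G : (ℕ → M) → M) (x : ℕ → M) :
    pcomp i n F G x = sgn ((i : ℤ) * ((n : ℤ) - 1)) • F (ins i n x (G fun j => x (i + j))) := rfl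

/-- An additive slot of `F`, as an additive homomorphism. -/
def slotHom {i : ℕ} {F : (ℕ → M) → M} (hF : AddAt i F) (n : ℕ) (x : ℕ → M) : M →+ M :=
  AddMonoidHom.mk' (fun a => F (ins i n x a)) fun a b => by
    simp only [ins_eq_update i n x (a + b), ins_eq_update i n x a, ins_eq_update i n x b]
    exact hF _ a b

/-- `G ↦ F ∘ᵢ G` as an additive homomorphism, for `F` additive in the slot `i`. -/
def pcompRight {i : ℕ} {F : (ℕ → M) → M} (hF : AddAt i F) (n : ℕ) :
    ((ℕ → M) → M) →+ ((ℕ → M) → M) :=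
  AddMonoidHom.mk' (fun G => pcomp i n F G) fun G G' => by
    funext x
    have := (slotHom hF n x).map_add (G fun j => x (i + j)) (G' fun j => x (i + j))
    simp only [slotHom, AddMonoidHom.mk'_apply] at this
    simp only [pcomp_apply, Pi.add_apply, this, smul_add]

/-- `F ↦ F ∘ᵢ G` as an additive homomorphism. -/
def pcompLeft (i n : ℕ) (G : (ℕ → M) → M) : ((ℕ → M) → M) →+ ((ℕ → M) → M) :=
  AddMonoidHom.mk' (fun F => pcomp i n F G) fun F F' => by
    funext x
    simp only [pcomp_apply, Pi.add_apply, smul_add]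

theorem pcomp_sum_left {ι : Type*} (s : Finset ι) (i n : ℕ) (F : ι → (ℕ → M) → M)
    (G : (ℕ → M) → M) : pcomp i n (∑ a ∈ s, F a) G = ∑ a ∈ s, pcomp i n (F a) G :=
  map_sum (pcompLeft i n G) F s

theorem pcomp_smul_left (c : ℤ) (i n : ℕ) (F G : (ℕ → M) → M) :
    pcomp i n (c • F) G = c • pcomp i n F G :=
  map_zsmul (pcompLeft i n G) c F

theorem pcomp_add_left (i n : ℕ) (F F' G : (ℕ → M) → M) :
    pcomp i n (F + F') G = pcomp i n F G + pcomp i n F' G :=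
  map_add (pcompLeft i n G) F F'

theorem pcomp_sub_left (i n : ℕ) (F F' G : (ℕ → M) → M) :
    pcomp i n (F - F') G = pcomp i n F G - pcomp i n F' G :=
  map_sub (pcompLeft i n G) F F'

theorem pcomp_sum_right {ι : Type*} (s : Finset ι) {i : ℕ} (n : ℕ) {F : (ℕ → M) → M}
    (hF : AddAt i F) (G : ι → (ℕ → M) → M) :
    pcomp i n F (∑ a ∈ s, G a) = ∑ a ∈ s, pcomp i n F (G a) :=
  map_sum (pcompRight hF n) G s

theorem pcomp_smul_right (c : ℤ) {i : ℕ} (n : ℕ) {F : (ℕ → M) → M}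
    (hF : AddAt i F) (G : (ℕ → M) → M) :
    pcomp i n F (c • G) = c • pcomp i n F G :=
  map_zsmul (pcompRight hF n) c G

theorem pcomp_sub_right {i : ℕ} (n : ℕ) {F : (ℕ → M) → M}
    (hF : AddAt i F) (G G' : (ℕ → M) → M) :
    pcomp i n F (G - G') = pcomp i n F G - pcomp i n F G' :=
  map_sub (pcompRight hF n) G G'

theorem pcomp_zero_left (i n : ℕ) (G : (ℕ → M) → M) : pcomp i n 0 G = 0 :=
  map_zero (pcompLeft i n G)

theorem pcomp_zero_right {i : ℕ} (n : ℕ) {F : (ℕ → M) → M} (hF : AddAt i F) :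
    pcomp i n F 0 = 0 :=
  map_zero (pcompRight hF n)

/-- A slot of `F` to the right of an inserted `G` stays additive; it moves from `j + 1` to
`j + m`. -/
theorem AddAt.pcomp_right {i j m : ℕ} {F G : (ℕ → M) → M} (hF : AddAt (j + 1) F)
    (hG : DepOn m G) (hij : i ≤ j) : AddAt (j + m) (pcomp i m F G) := by
  intro x a b
  have key : ∀ c : M, ins i m (Function.update x (j + m) c)
      (G fun k => Function.update x (j + m) c (i + k)) =
      Function.update (ins i m x (G fun k => x (i + k))) (j + 1) c := by
    intro c
    have hGc : (G fun k => Function.update x (j + m) c (i + k)) = G fun k => x (i + k) := by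
      apply hG
      intro k hk
      rw [Function.update_of_ne (by omega)]
    funext k
    rw [hGc]
    simp only [ins, Function.update_apply]
    split_ifs <;> first | rfl | omega
  simp only [pcomp_apply, key, hF _ a b, smul_add]

/-! ### The operad relations -/

/-- Sequential composition: inserting `H` into a slot of `F ∘ᵢ G` that belongs to `G`. -/
theorem pcomp_seq {i j m n q : ℕ} {F G H : (ℕ → M) → M} (hF : AddAt i F) (hj : j < m)
    (hq : q + 1 = m + n) :
    pcomp (i + j) n (pcomp i m F G) H = pcomp i q F (pcomp j n G H) := by
  funext x
  simp only [pcomp_apply]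
  have e := map_zsmul (slotHom hF q x) (sgn ((j : ℤ) * ((n : ℤ) - 1)))
    (G (ins j n (fun k => x (i + k)) (H fun k => x (i + (j + k)))))
  simp only [slotHom, AddMonoidHom.mk'_apply] at e
  rw [e, smul_smul, smul_smul, ← sgn_add, ← sgn_add]
  congr 1
  · congr 1
    have : (q : ℤ) = m + n - 1 := by omega
    rw [this]; push_cast; ring
  · congr 1
    have hin : (fun k => ins (i + j) n x (H fun j_1 => x (i + j + j_1)) (i + k)) =
        ins j n (fun k => x (i + k)) (H fun k => x (i + (j + k))) := by
      funext k
      simp only [ins, add_assoc, add_lt_add_iff_left, add_right_inj]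
      split_ifs
      · rfl
      · rfl
      · congr 1; omega
    rw [hin]
    funext k
    simp only [ins]
    split_ifs <;> first | rfl | omega | (congr 1; omega)

/-- Parallel composition: insertions into two different slots of `F` commute up to sign. -/
theorem pcomp_par {i j m n : ℕ} {F G H : (ℕ → M) → M} (hG : DepOn m G) (hij : i ≤ j) :
    pcomp (j + m) n (pcomp i m F G) H =
      sgn (((m : ℤ) - 1) * ((n : ℤ) - 1)) • pcomp i m (pcomp (j + 1) n F H) G := by
  funext x
  simp only [Pi.smul_apply, pcomp_apply, smul_smul, ← sgn_add]
  congr 1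
  · congr 1
    push_cast; ring
  · congr 1
    have hin : (G fun k => ins (j + m) n x (H fun k => x (j + m + k)) (i + k)) =
        G fun k => x (i + k) := by
      apply hG
      intro k hk
      simp only [ins]
      split_ifs <;> first | rfl | omega
    have hin' : (H fun k => ins i m x (G fun k => x (i + k)) (j + 1 + k)) =
        H fun k => x (j + m + k) := by
      congr 1
      funext k
      simp only [ins]
      split_ifs <;> first | rfl | omega | (congr 1; omega)
    rw [hin, hin']
    funext k
    simp only [ins]
    split_ifs <;> first | rfl | omega | (congr 1; omega)

/-- `pcomp_par` read from right to left, with the later slot written as `j`. -/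
theorem pcomp_par_symm {i j q m n : ℕ} {F G H : (ℕ → M) → M} (hG : DepOn m G) (hij : i < j)
    (hq : q + 1 = j + m) :
    pcomp i m (pcomp j n F H) G =
      sgn (((m : ℤ) - 1) * ((n : ℤ) - 1)) • pcomp q n (pcomp i m F G) H := by
  obtain ⟨j, rfl⟩ : ∃ k, j = k + 1 := ⟨j - 1, by omega⟩
  obtain rfl : q = j + m := by omega
  rw [pcomp_par hG (by omega), smul_smul, sgn_mul_self, one_smul]

end

/-! ### Splitting the index set -/

set_option maxHeartbeats 1000000 in
/-- The sum over the positions of `f` (slot `i`) and `g` (slot `J + 1 > i`) in `h ∘ₗ μ`, split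
according to the mutual position of the three inserted operations: `μ` left of, between or right of
`f` and `g`; `f` inside `μ`; `g` inside `μ`; both inside `μ`. -/
theorem sum_positions_split {A : Type*} [AddCommMonoid A] (r : ℕ) (φ : ℕ → ℕ → ℕ → A) :
    ∑ l ∈ range (r + 1), ∑ i ∈ range (r + 1), ∑ J ∈ Ico i (r + 1), φ l i J =
      (∑ i ∈ range r, ∑ J ∈ Ico i r, ∑ l ∈ range i, φ l (i + 1) (J + 1)) +
      (∑ i ∈ range r, ∑ J ∈ Ico i r, ∑ t ∈ Ico i J, φ (t + 1) i (J + 1)) +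
      (∑ i ∈ range r, ∑ J ∈ Ico i r, ∑ t ∈ Ico J (r - 1), φ (t + 2) i J) +
      (∑ i ∈ range r, ∑ J ∈ Ico i r, (φ i i (J + 1) + φ i (i + 1) (J + 1))) +
      (∑ i ∈ range r, ∑ J ∈ Ico i r, (φ (J + 1) i J + φ (J + 1) i (J + 1))) +
      ∑ l ∈ range (r + 1), φ l l l := by
  set U : Finset (ℕ × ℕ × ℕ) :=
    (range (r + 1) ×ˢ range (r + 1) ×ˢ range (r + 1)).filter fun x => x.2.1 ≤ x.2.2 with hU
  have h0 : ∑ l ∈ range (r + 1), ∑ i ∈ range (r + 1), ∑ J ∈ Ico i (r + 1), φ l i J =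
      ∑ x ∈ U, φ x.1 x.2.1 x.2.2 := by
    rw [sum_sigma', sum_sigma']
    refine sum_nbij' (fun y => (y.1.1, y.1.2, y.2)) (fun x => ⟨⟨x.1, x.2.1⟩, x.2.2⟩) ?_ ?_ ?_ ?_ ?_
    all_goals simp [hU]
    all_goals omega
  have h1 : ∑ i ∈ range r, ∑ J ∈ Ico i r, ∑ l ∈ range i, φ l (i + 1) (J + 1) =
      ∑ x ∈ U, if x.1 + 1 < x.2.1 then φ x.1 x.2.1 x.2.2 else 0 := by
    rw [← sum_filter, sum_sigma', sum_sigma']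
    refine sum_nbij' (fun y => (y.2, y.1.1 + 1, y.1.2 + 1))
      (fun x => ⟨⟨x.2.1 - 1, x.2.2 - 1⟩, x.1⟩) ?_ ?_ ?_ ?_ ?_
    all_goals simp [hU]
    all_goals omega
  have h2 : ∑ i ∈ range r, ∑ J ∈ Ico i r, ∑ t ∈ Ico i J, φ (t + 1) i (J + 1) =
      ∑ x ∈ U, if x.2.1 < x.1 ∧ x.1 < x.2.2 then φ x.1 x.2.1 x.2.2 else 0 := by
    rw [← sum_filter, sum_sigma', sum_sigma']
    refine sum_nbij' (fun y => (y.2 + 1, y.1.1, y.1.2 + 1))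
      (fun x => ⟨⟨x.2.1, x.2.2 - 1⟩, x.1 - 1⟩) ?_ ?_ ?_ ?_ ?_
    all_goals simp [hU]
    all_goals omega
  have h3 : ∑ i ∈ range r, ∑ J ∈ Ico i r, ∑ t ∈ Ico J (r - 1), φ (t + 2) i J =
      ∑ x ∈ U, if x.2.2 + 1 < x.1 then φ x.1 x.2.1 x.2.2 else 0 := by
    rw [← sum_filter, sum_sigma', sum_sigma']
    refine sum_nbij' (fun y => (y.2 + 2, y.1.1, y.1.2))
      (fun x => ⟨⟨x.2.1, x.2.2⟩, x.1 - 2⟩) ?_ ?_ ?_ ?_ ?_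
    all_goals simp [hU]
    all_goals omega
  have h4 : ∑ i ∈ range r, ∑ J ∈ Ico i r, φ i i (J + 1) =
      ∑ x ∈ U, if x.1 = x.2.1 ∧ x.2.1 < x.2.2 then φ x.1 x.2.1 x.2.2 else 0 := by
    rw [← sum_filter, sum_sigma']
    refine sum_nbij' (fun y => (y.1, y.1, y.2 + 1)) (fun x => ⟨x.1, x.2.2 - 1⟩) ?_ ?_ ?_ ?_ ?_
    all_goals simp [hU]
    all_goals omega
  have h5 : ∑ i ∈ range r, ∑ J ∈ Ico i r, φ i (i + 1) (J + 1) =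
      ∑ x ∈ U, if x.1 + 1 = x.2.1 then φ x.1 x.2.1 x.2.2 else 0 := by
    rw [← sum_filter, sum_sigma']
    refine sum_nbij' (fun y => (y.1, y.1 + 1, y.2 + 1)) (fun x => ⟨x.1, x.2.2 - 1⟩) ?_ ?_ ?_ ?_ ?_
    all_goals simp [hU]
    all_goals omega
  have h6 : ∑ i ∈ range r, ∑ J ∈ Ico i r, φ (J + 1) i J =
      ∑ x ∈ U, if x.1 = x.2.2 + 1 then φ x.1 x.2.1 x.2.2 else 0 := by
    rw [← sum_filter, sum_sigma']
    refine sum_nbij' (fun y => (y.2 + 1, y.1, y.2)) (fun x => ⟨x.2.1, x.2.2⟩) ?_ ?_ ?_ ?_ ?_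
    all_goals simp [hU]
    all_goals omega
  have h7 : ∑ i ∈ range r, ∑ J ∈ Ico i r, φ (J + 1) i (J + 1) =
      ∑ x ∈ U, if x.1 = x.2.2 ∧ x.2.1 < x.2.2 then φ x.1 x.2.1 x.2.2 else 0 := by
    rw [← sum_filter, sum_sigma']
    refine sum_nbij' (fun y => (y.2 + 1, y.1, y.2 + 1)) (fun x => ⟨x.2.1, x.2.2 - 1⟩) ?_ ?_ ?_ ?_ ?_
    all_goals simp [hU]
    all_goals omega
  have h8 : ∑ l ∈ range (r + 1), φ l l l =
      ∑ x ∈ U, if x.1 = x.2.1 ∧ x.2.1 = x.2.2 then φ x.1 x.2.1 x.2.2 else 0 := by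
    rw [← sum_filter]
    refine sum_nbij' (fun y => (y, y, y)) (fun x => x.1) ?_ ?_ ?_ ?_ ?_
    all_goals simp [hU]
    all_goals omega
  simp only [sum_add_distrib]
  rw [h0, h1, h2, h3, h4, h5, h6, h7, h8]
  simp only [← sum_add_distrib]
  refine sum_congr rfl ?_
  rintro ⟨l, i, J⟩ hx
  simp only [hU, mem_filter] at hx
  replace hx := hx.2
  simp only at hx ⊢
  split_ifs <;> first | omega | simp

/-! ### Brace relations with a binary operation -/

section

variable {M : Type*} [AddCommGroup M]

theorem tcomp_smul_left (c : ℤ) (p n : ℕ) (F G : (ℕ → M) → M) :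
    tcomp p n (c • F) G = c • tcomp p n F G := by
  simp only [tcomp, pcomp_smul_left, smul_sum]

theorem tcomp_smul_right (c : ℤ) {p n : ℕ} {F G : (ℕ → M) → M} (hF : ∀ i < p, AddAt i F) :
    tcomp p n F (c • G) = c • tcomp p n F G := by
  simp only [tcomp, smul_sum]
  exact sum_congr rfl fun i hi => pcomp_smul_right c n (hF i (mem_range.mp hi)) G

/-- `{h, f, g}` for `h` of arity `r + 1`, indexed by the slots `i` of `f` and `J + 1` of `g` in `h`. -/
theorem triFn_succ (r m n : ℕ) (H F G : (ℕ → M) → M) :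
    triFn (r + 1) m n H F G =
      ∑ i ∈ range r, ∑ J ∈ Ico i r, pcomp (J + m) n (pcomp i m H F) G := by
  unfold triFn
  refine sum_congr (by simp) fun i hi => ?_
  have hi' : i < r := by simpa using hi
  rw [sum_Ico_add' (fun j => pcomp j n (pcomp i m H F) G) i r m]
  refine sum_congr ?_ fun _ _ => rfl
  ext j
  simp only [mem_Icc, mem_Ico]
  omega

theorem triFn_sub_smul_left (p m n : ℕ) (c : ℤ) (H H' F G : (ℕ → M) → M) :
    triFn p m n (H - c • H') F G = triFn p m n H F G - c • triFn p m n H' F G := by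
  simp only [triFn, pcomp_sub_left, pcomp_smul_left, sum_sub_distrib, smul_sum]

theorem triFn_sub_smul_mid {p m n : ℕ} (c : ℤ) {H F F' G : (ℕ → M) → M}
    (hH : ∀ i < p, AddAt i H) :
    triFn p m n H (F - c • F') G = triFn p m n H F G - c • triFn p m n H F' G := by
  simp only [triFn, smul_sum, ← sum_sub_distrib]
  refine sum_congr rfl fun i hi => sum_congr rfl fun j _ => ?_
  have hi' : i < p := by simp at hi; omega
  rw [pcomp_sub_right _ (hH i hi'), pcomp_smul_right _ _ (hH i hi'), pcomp_sub_left,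
    pcomp_smul_left]

theorem triFn_sub_smul_right {p m n : ℕ} (c : ℤ) {H F G G' : (ℕ → M) → M}
    (hH : ∀ i < p, AddAt i H) (hF : DepOn m F) :
    triFn p m n H F (G - c • G') = triFn p m n H F G - c • triFn p m n H F G' := by
  cases p with
  | zero => simp [triFn]
  | succ r =>
    simp only [triFn_succ, smul_sum, ← sum_sub_distrib]
    refine sum_congr rfl fun i hi => sum_congr rfl fun J hJ => ?_
    simp only [mem_Ico] at hJ
    have hA : AddAt (J + m) (pcomp i m H F) := (hH (J + 1) (by omega)).pcomp_right hF hJ.1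
    rw [pcomp_sub_right _ hA, pcomp_smul_right _ _ hA]

/-- The part of `{h, f, g} • μ` in which `μ` sits in a slot of `h` (of arity `r + 1`): to the left
of `f`, between `f` and `g`, and to the right of `g`. -/
def tripleInsert (r m n : ℕ) (H F G Mu : (ℕ → M) → M) : (ℕ → M) → M :=
  (∑ i ∈ range r, ∑ J ∈ Ico i r, ∑ k ∈ range i,
      pcomp k 2 (pcomp (J + m) n (pcomp i m H F) G) Mu) +
  (∑ i ∈ range r, ∑ J ∈ Ico i r, ∑ t ∈ Ico i J,
      pcomp (t + m) 2 (pcomp (J + m) n (pcomp i m H F) G) Mu) +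
  ∑ i ∈ range r, ∑ J ∈ Ico i r, ∑ t ∈ Ico J (r - 1),
      pcomp (t + m + n) 2 (pcomp (J + m) n (pcomp i m H F) G) Mu

theorem sum_range_split {A : Type*} [AddCommMonoid A] {r m n i J : ℕ} (φ : ℕ → A) (hiJ : i ≤ J)
    (hJ : J < r) :
    ∑ k ∈ range (r + 1 + m + n - 2), φ k =
      ∑ k ∈ range i, φ k + ∑ k ∈ range m, φ (i + k) + ∑ t ∈ Ico i J, φ (t + m) +
        ∑ k ∈ range n, φ (J + m + k) + ∑ t ∈ Ico J (r - 1), φ (t + m + n) := by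
  have e1 := sum_Ico_eq_sum_range φ i (i + m)
  have e2 := sum_Ico_add' φ i J m
  have e3 := sum_Ico_eq_sum_range φ (J + m) (J + m + n)
  have e4 := sum_Ico_add' φ J (r - 1) (m + n)
  simp only [Nat.add_sub_cancel_left, ← add_assoc] at e1 e2 e3 e4
  rw [← e1, e2, ← e3, e4, range_eq_Ico, range_eq_Ico, sum_Ico_consecutive _ (by omega) (by omega),
    sum_Ico_consecutive _ (by omega) (by omega), sum_Ico_consecutive _ (by omega) (by omega),
    sum_Ico_consecutive _ (by omega) (by omega)]
  congr 2
  omega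

/-- The brace relation for `{h, f, g} • μ`. -/
theorem tcomp_triFn {r m n : ℕ} {H F G Mu : (ℕ → M) → M} (hH : ∀ i < r + 1, AddAt i H)
    (hF : DepOn m F) (hMu : DepOn 2 Mu) :
    tcomp (r + 1 + m + n - 2) 2 (triFn (r + 1) m n H F G) Mu =
      tripleInsert r m n H F G Mu +
        sgn ((n : ℤ) - 1) • triFn (r + 1) (m + 1) n H (tcomp m 2 F Mu) G +
        triFn (r + 1) m (n + 1) H F (tcomp n 2 G Mu) := by
  simp only [tcomp, tripleInsert, triFn_succ, pcomp_sum_left]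
  rw [sum_comm]
  simp only [smul_sum, ← sum_add_distrib]
  refine sum_congr rfl fun i hi => ?_
  rw [sum_comm]
  refine sum_congr rfl fun J hJ => ?_
  simp only [mem_Ico] at hJ
  rw [sum_range_split _ hJ.1 hJ.2]
  have hA : AddAt (J + m) (pcomp i m H F) := (hH (J + 1) (by omega)).pcomp_right hF hJ.1
  have e1 : ∑ k ∈ range m, pcomp (i + k) 2 (pcomp (J + m) n (pcomp i m H F) G) Mu =
      sgn ((n : ℤ) - 1) • pcomp (J + (m + 1)) n
        (pcomp i (m + 1) H (∑ k ∈ range m, pcomp k 2 F Mu)) G := by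
    rw [pcomp_sum_right _ _ (hH i (by omega)), pcomp_sum_left, smul_sum]
    refine sum_congr rfl fun k hk => ?_
    rw [mem_range] at hk
    rw [pcomp_par_symm (q := J + (m + 1)) hMu (by omega) (by omega),
      pcomp_seq (q := m + 1) (hH i (by omega)) hk (by omega)]
    congr 2
    ring
  have e2 : ∑ k ∈ range n, pcomp (J + m + k) 2 (pcomp (J + m) n (pcomp i m H F) G) Mu =
      pcomp (J + m) (n + 1) (pcomp i m H F) (∑ k ∈ range n, pcomp k 2 G Mu) := by
    rw [pcomp_sum_right _ _ hA]
    refine sum_congr rfl fun k hk => ?_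
    rw [mem_range] at hk
    exact pcomp_seq hA hk (by omega)
  rw [e1, e2]
  abel

/-- The brace relation for `{h • μ, f, g}`. -/
theorem triFn_tcomp {r m n : ℕ} {H F G Mu : (ℕ → M) → M} (hH : ∀ i < r + 1, AddAt i H)
    (hF : DepOn m F) (hG : DepOn n G) (hMu : DepOn 2 Mu) :
    triFn (r + 1 + 1) m n (tcomp (r + 1) 2 H Mu) F G =
      sgn (((n : ℤ) - 1) + ((m : ℤ) - 1)) • tripleInsert r m n H F G Mu +
        triFn (r + 1) (m + 1) n H (tcomp 2 m Mu F) G +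
        sgn ((m : ℤ) - 1) • triFn (r + 1) m (n + 1) H F (tcomp 2 n Mu G) +
        tcomp (r + 1) (m + n) H (pcomp m n (pcomp 0 m Mu F) G) := by
  have e0 : triFn (r + 1 + 1) m n (tcomp (r + 1) 2 H Mu) F G =
      ∑ l ∈ range (r + 1), ∑ i ∈ range (r + 1), ∑ J ∈ Ico i (r + 1),
        pcomp (J + m) n (pcomp i m (pcomp l 2 H Mu) F) G := by
    simp only [triFn_succ, tcomp, pcomp_sum_left]
    rw [sum_comm]
    refine sum_congr rfl fun i _ => ?_
    rw [sum_comm]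
  rw [e0, sum_positions_split]
  have s2 : ∀ a : ℤ, (((2 : ℕ) : ℤ) - 1) * a = a := fun a => by norm_num
  have s2' : ∀ a : ℤ, a * (((2 : ℕ) : ℤ) - 1) = a := fun a => by norm_num
  have hn := sgn_mul_self ((n : ℤ) - 1)
  have hm := sgn_mul_self ((m : ℤ) - 1)
  simp only [tripleInsert, smul_add, smul_sum]
  congr 1
  · congr 1
    · congr 1
      · congr 1
        · congr 1
          · refine sum_congr rfl fun i _ => sum_congr rfl fun J hJ => sum_congr rfl fun k hk => ?_
            rw [mem_Ico] at hJ
            rw [mem_range] at hk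
            rw [pcomp_par_symm (q := J + 1 + m) hMu (by omega) (by omega),
              pcomp_par_symm (q := i + 1) hMu hk (by omega), pcomp_smul_left]
            simp only [s2, smul_smul, sgn_add]
            rw [mul_mul_mul_comm, hn, hm, one_mul, one_smul]
          · refine sum_congr rfl fun i _ => sum_congr rfl fun J hJ => sum_congr rfl fun t ht => ?_
            rw [mem_Ico] at hJ ht
            rw [pcomp_par_symm (q := J + 1 + m) hMu (by omega) (by omega),
              pcomp_par_symm (q := t + m) hF (by omega) (by omega), pcomp_smul_left]
            simp only [s2, s2', smul_smul, sgn_add]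
            congr 1
            linear_combination -sgn ((m : ℤ) - 1) * hn
        · refine sum_congr rfl fun i _ => sum_congr rfl fun J hJ => sum_congr rfl fun t ht => ?_
          rw [mem_Ico] at hJ ht
          rw [pcomp_par_symm (q := t + 1 + m) hF (by omega) (by omega), pcomp_smul_left,
            pcomp_par_symm (q := t + m + n) hG (by omega) (by omega)]
          simp only [s2', smul_smul, sgn_add]
          congr 1
          ring
      · rw [triFn_succ]
        refine sum_congr rfl fun i hi => sum_congr rfl fun J hJ => ?_
        rw [mem_range] at hi
        have hi' := hH i (by omega)
        rw [tcomp, pcomp_sum_right _ _ hi', pcomp_sum_left, sum_range_succ, sum_range_one]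
        rw [← pcomp_seq (i := i) (j := 0) (m := 2) (n := m) hi' (by omega) (by omega),
          ← pcomp_seq (i := i) (j := 1) (m := 2) (n := m) hi' (by omega) (by omega)]
        rw [show J + 1 + m = J + (m + 1) by ring, add_zero]
    · rw [triFn_succ]
      simp only [smul_sum]
      refine sum_congr rfl fun i hi => sum_congr rfl fun J hJ => ?_
      rw [mem_Ico] at hJ
      have hA : AddAt (J + m) (pcomp i m H F) := (hH (J + 1) (by omega)).pcomp_right hF hJ.1
      rw [pcomp_par_symm (q := J + m) hF (by omega) (by omega), pcomp_smul_left, pcomp_smul_left,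
        tcomp, pcomp_sum_right _ _ hA, sum_range_succ, sum_range_one,
        ← pcomp_seq (i := J + m) (j := 0) (m := 2) (n := n) hA (by omega) (by omega),
        ← pcomp_seq (i := J + m) (j := 1) (m := 2) (n := n) hA (by omega) (by omega),
        s2', smul_add, add_zero, show J + 1 + m = J + m + 1 by ring]
  · refine sum_congr rfl fun l hl => ?_
    rw [mem_range] at hl
    have e := pcomp_seq (i := l) (j := 0) (m := 2) (n := m) (q := m + 1) (F := H) (G := Mu)
      (H := F) (hH l hl) (by omega) (by omega)
    rw [add_zero] at e
    rw [e, pcomp_seq (q := m + n) (hH l hl) (by omega) (by omega)]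

/-- The brace relation for `{μ • h, f, g}`; the arity of `μ` leaves no room for `h`, `f` and `g`
in three different slots. -/
theorem triFn_tcomp_binary {r m n : ℕ} {H F G Mu : (ℕ → M) → M} (h0 : AddAt 0 Mu)
    (h1 : AddAt 1 Mu) (hF : DepOn m F) :
    triFn (r + 1 + 1) m n (tcomp 2 (r + 1) Mu H) F G =
      tcomp 2 (r + 1 + m + n - 2) Mu (triFn (r + 1) m n H F G) +
        pcomp (r + 1 + m - 1) n (pcomp 0 (r + 1 + m - 1) Mu (tcomp (r + 1) m H F)) G +
        sgn ((((r + 1 : ℕ) : ℤ) - 1) * ((m : ℤ) - 1)) •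
          pcomp m (r + 1 + n - 1) (pcomp 0 m Mu F) (tcomp (r + 1) n H G) := by
  have e0 : ∀ i < r + 1, ∀ J, pcomp (J + m) n (pcomp i m (pcomp 0 (r + 1) Mu H) F) G =
      pcomp (J + m) n (pcomp 0 (r + 1 + m - 1) Mu (pcomp i m H F)) G := by
    intro i hi J
    have := pcomp_seq (i := 0) (j := i) (m := r + 1) (n := m) (q := r + 1 + m - 1) (F := Mu)
      (G := H) (H := F) h0 hi (by omega)
    rw [← this, zero_add]
  have e1 : ∀ i < r + 1, ∀ J, pcomp (J + m) n (pcomp (i + 1) m (pcomp 1 (r + 1) Mu H) F) G =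
      pcomp (J + m) n (pcomp 1 (r + 1 + m - 1) Mu (pcomp i m H F)) G := by
    intro i hi J
    rw [add_comm i 1, pcomp_seq (q := r + 1 + m - 1) h1 hi (by omega)]
  have x0 : ∑ i ∈ range (r + 1), ∑ J ∈ Ico i (r + 1),
      pcomp (J + m) n (pcomp i m (pcomp 0 (r + 1) Mu H) F) G =
      pcomp 0 (r + 1 + m + n - 2) Mu (triFn (r + 1) m n H F G) +
        pcomp (r + 1 + m - 1) n (pcomp 0 (r + 1 + m - 1) Mu (tcomp (r + 1) m H F)) G := by
    have : ∀ i ∈ range (r + 1), ∑ J ∈ Ico i (r + 1),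
        pcomp (J + m) n (pcomp i m (pcomp 0 (r + 1) Mu H) F) G =
        ∑ J ∈ Ico i r, pcomp 0 (r + 1 + m + n - 2) Mu (pcomp (J + m) n (pcomp i m H F) G) +
          pcomp (r + 1 + m - 1) n (pcomp 0 (r + 1 + m - 1) Mu (pcomp i m H F)) G := by
      intro i hi
      rw [mem_range] at hi
      rw [sum_Ico_succ_top (by omega), e0 i hi, show r + 1 + m - 1 = r + m by omega]
      congr 1
      refine sum_congr rfl fun J hJ => ?_
      rw [mem_Ico] at hJ
      rw [e0 i hi, ← pcomp_seq (i := 0) (j := J + m) (m := r + 1 + m - 1) h0 (by omega) (by omega),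
        zero_add]
    rw [sum_congr rfl this, sum_add_distrib, sum_range_succ, Ico_self, sum_empty, add_zero,
      triFn_succ, tcomp]
    simp only [pcomp_sum_right _ _ h0, pcomp_sum_left]
  have x1 : ∑ i ∈ range (r + 1), ∑ J ∈ Ico i (r + 1),
      pcomp (J + m) n (pcomp i m (pcomp 1 (r + 1) Mu H) F) G =
      pcomp 1 (r + 1 + m + n - 2) Mu (triFn (r + 1) m n H F G) +
        sgn ((((r + 1 : ℕ) : ℤ) - 1) * ((m : ℤ) - 1)) •
          pcomp m (r + 1 + n - 1) (pcomp 0 m Mu F) (tcomp (r + 1) n H G) := by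
    rw [sum_range_succ']
    congr 1
    · simp only [triFn_succ, pcomp_sum_right _ _ h1]
      refine sum_congr rfl fun i hi => ?_
      rw [mem_range] at hi
      rw [← sum_Ico_add' _ i r 1]
      refine sum_congr rfl fun J hJ => ?_
      rw [mem_Ico] at hJ
      rw [e1 i (by omega), show J + 1 + m = 1 + (J + m) by ring,
        pcomp_seq (q := r + 1 + m + n - 2) h1 (by omega) (by omega)]
    · have hA : AddAt m (pcomp 0 m Mu F) := by
        simpa using (AddAt.pcomp_right (i := 0) (j := 0) h1 hF le_rfl)
      rw [tcomp, pcomp_sum_right _ _ hA, smul_sum, ← range_eq_Ico]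
      refine sum_congr rfl fun J hJ => ?_
      rw [mem_range] at hJ
      rw [pcomp_par_symm (q := m) hF (by omega) (by omega), pcomp_smul_left, add_comm J m,
        pcomp_seq (q := r + 1 + n - 1) hA hJ (by omega), mul_comm]
  rw [triFn_succ]
  have hb : ∀ (q : ℕ) (X : (ℕ → M) → M), tcomp 2 q Mu X = pcomp 0 q Mu X + pcomp 1 q Mu X :=
    fun q X => by rw [tcomp, sum_range_succ, sum_range_one]
  simp only [hb (r + 1) H, pcomp_add_left, sum_add_distrib]
  rw [x0, x1, hb]
  abel

/-- The brace relation for `{μ, f, g} • h`. -/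
theorem tcomp_binary {p m n : ℕ} {H F G Mu : (ℕ → M) → M} (h0 : AddAt 0 Mu)
    (h1 : AddAt 1 Mu) (hF : DepOn m F) (hH : DepOn p H) :
    tcomp (m + n) p (pcomp m n (pcomp 0 m Mu F) G) H =
      sgn (((p : ℤ) - 1) * ((n : ℤ) - 1)) •
        pcomp (p + m - 1) n (pcomp 0 (p + m - 1) Mu (tcomp m p F H)) G +
      pcomp m (p + n - 1) (pcomp 0 m Mu F) (tcomp n p G H) := by
  have hA : AddAt m (pcomp 0 m Mu F) := by
    simpa using (AddAt.pcomp_right (i := 0) (j := 0) h1 hF le_rfl)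
  rw [tcomp, tcomp, tcomp, sum_range_add, pcomp_sum_right _ _ hA, pcomp_sum_right _ _ h0,
    pcomp_sum_left, smul_sum]
  congr 1
  · refine sum_congr rfl fun k hk => ?_
    rw [mem_range] at hk
    rw [pcomp_par_symm (q := p + m - 1) hH hk (by omega),
      ← pcomp_seq (i := 0) (j := k) h0 hk (by omega), zero_add]
  · refine sum_congr rfl fun k hk => ?_
    rw [mem_range] at hk
    rw [pcomp_seq (q := p + n - 1) hA hk (by omega)]

end

/-! ### Multilinear maps -/

theorem toFn_depOn {n : ℕ} (f : MultilinearMap K (fun _ : Fin n => L) L) : DepOn n (toFn f) := by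
  intro x y h
  unfold toFn
  congr 1
  funext a
  exact h a a.2

theorem toFn_addAt {n : ℕ} (f : MultilinearMap K (fun _ : Fin n => L) L) {i : ℕ} (hi : i < n) :
    AddAt i (toFn f) := by
  intro x a b
  have key : ∀ c : L, (fun k : Fin n => Function.update x i c k.val) =
      Function.update (fun k : Fin n => x k.val) ⟨i, hi⟩ c := by
    intro c
    funext k
    simp only [Function.update_apply, Fin.ext_iff]
  simp only [toFn, key]
  exact f.map_update_add _ _ _ _

/-- Bracket form of the derivation deviation over the tribraces: in the endomorphism operad,
`(-1)^{deg g} (dev_braces ∂)(h ⊗ f ⊗ g) = [h, f] ⌣ g + (-1)^{|h|·deg f} f ⌣ [h, g] - [h, f ⌣ g]`,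
the graded Leibniz rule up to the derivation deviation. -/
theorem endop_dev_tribraces_bracket {p m n : ℕ} (μ : MultilinearMap K (fun _ : Fin 2 => L) L)
    (h : MultilinearMap K (fun _ : Fin p => L) L) (f : MultilinearMap K (fun _ : Fin m => L) L) (g : MultilinearMap K (fun _ : Fin n => L) L) :
    sgn (n : ℤ) •
        (gbr (p + m + n - 2) 2 (triFn p m n (toFn h) (toFn f) (toFn g)) (toFn μ) -
          triFn p m (n + 1) (toFn h) (toFn f) (gbr n 2 (toFn g) (toFn μ)) -
          sgn ((n : ℤ) - 1) • triFn p (m + 1) n (toFn h) (gbr m 2 (toFn f) (toFn μ)) (toFn g) -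
          sgn (((n : ℤ) - 1) + ((m : ℤ) - 1)) •
            triFn (p + 1) m n (gbr p 2 (toFn h) (toFn μ)) (toFn f) (toFn g)) =
      cupFn (p + m - 1) n (toFn μ) (gbr p m (toFn h) (toFn f)) (toFn g) +
        sgn (((p : ℤ) - 1) * (m : ℤ)) •
          cupFn m (p + n - 1) (toFn μ) (toFn f) (gbr p n (toFn h) (toFn g)) -
        gbr p (m + n) (toFn h) (cupFn m n (toFn μ) (toFn f) (toFn g)) := by
  have hdf := toFn_depOn f
  have hdg := toFn_depOn g
  have hdh := toFn_depOn h
  have hdμ := toFn_depOn μ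
  have hh : ∀ i < p, AddAt i (toFn h) := fun i hi => toFn_addAt h hi
  have h0 : AddAt 0 (toFn μ) := toFn_addAt μ (by omega)
  have h1 : AddAt 1 (toFn μ) := toFn_addAt μ (by omega)
  generalize toFn μ = Mu at *
  generalize toFn h = H at *
  generalize toFn f = F at *
  generalize toFn g = G at *
  have hA : AddAt m (pcomp 0 m Mu F) := by
    simpa using (AddAt.pcomp_right (i := 0) (j := 0) h1 hdf le_rfl)
  -- `S` collects the triple insertions; for `p = 0` all the braces of `h` vanish.
  obtain ⟨S, eA, eB, eC⟩ : ∃ S : (ℕ → L) → L,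
      tcomp (p + m + n - 2) 2 (triFn p m n H F G) Mu =
        S + sgn ((n : ℤ) - 1) • triFn p (m + 1) n H (tcomp m 2 F Mu) G +
          triFn p m (n + 1) H F (tcomp n 2 G Mu) ∧
      triFn (p + 1) m n (tcomp p 2 H Mu) F G =
        sgn (((n : ℤ) - 1) + ((m : ℤ) - 1)) • S + triFn p (m + 1) n H (tcomp 2 m Mu F) G +
          sgn ((m : ℤ) - 1) • triFn p m (n + 1) H F (tcomp 2 n Mu G) +
          tcomp p (m + n) H (pcomp m n (pcomp 0 m Mu F) G) ∧
      triFn (p + 1) m n (tcomp 2 p Mu H) F G =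
        tcomp 2 (p + m + n - 2) Mu (triFn p m n H F G) +
          pcomp (p + m - 1) n (pcomp 0 (p + m - 1) Mu (tcomp p m H F)) G +
          sgn (((p : ℤ) - 1) * ((m : ℤ) - 1)) •
            pcomp m (p + n - 1) (pcomp 0 m Mu F) (tcomp p n H G) := by
    cases p with
    | zero =>
      refine ⟨0, ?_, ?_, ?_⟩
      · simp [triFn, tcomp, pcomp_zero_left]
      · simp [triFn, tcomp]
      · simp [triFn, tcomp, sum_range_succ, pcomp_zero_left, pcomp_zero_right _ h0,
          pcomp_zero_right _ h1, pcomp_zero_right _ hA]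
    | succ r =>
      exact ⟨_, tcomp_triFn hh hdf hdμ, triFn_tcomp hh hdf hdg hdμ, triFn_tcomp_binary h0 h1 hdf⟩
  have eD := tcomp_binary (G := G) (n := n) h0 h1 hdf hdh
  -- The arities `p + m + n - 2` and `p + m - 1` are truncated only where the maps vanish.
  have eN : sgn ((((p + m + n - 2 : ℕ) : ℤ) - 1) * (((2 : ℕ) : ℤ) - 1)) •
      tcomp 2 (p + m + n - 2) Mu (triFn p m n H F G) =
      sgn ((p : ℤ) + m + n - 1) • tcomp 2 (p + m + n - 2) Mu (triFn p m n H F G) := by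
    by_cases hp : 2 ≤ p
    · congr 1
      apply sgn_eq_of_even_sub
      rw [show p + m + n - 2 = (p - 2) + m + n by omega]
      push_cast [Nat.cast_sub hp]
      exact ⟨-1, by ring⟩
    · have : triFn p m n H F G = 0 := by
        simp [triFn, show p - 1 = 0 by omega]
      simp [this, tcomp, sum_range_succ, pcomp_zero_right _ h0, pcomp_zero_right _ h1]
  have eP : sgn ((p + m - 1 : ℕ) : ℤ) • pcomp (p + m - 1) n (pcomp 0 (p + m - 1) Mu
      (gbr p m H F)) G = sgn ((p : ℤ) + m - 1) • pcomp (p + m - 1) n (pcomp 0 (p + m - 1) Mu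
      (gbr p m H F)) G := by
    by_cases hp : 1 ≤ p + m
    · congr 2
      push_cast [Nat.cast_sub hp]
      ring
    · have hp0 : p = 0 := by omega
      have hm0 : m = 0 := by omega
      simp [hp0, hm0, gbr, tcomp, pcomp_zero_right _ h0, pcomp_zero_left]
  simp only [cupFn]
  rw [eP]
  simp only [gbr, triFn_sub_smul_left, triFn_sub_smul_mid _ hh, triFn_sub_smul_right _ hh hdf,
    tcomp_smul_left, tcomp_smul_right _ hh,
    pcomp_sub_right _ h0, pcomp_smul_right _ _ h0, pcomp_sub_left, pcomp_smul_left,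
    pcomp_sub_right _ hA, pcomp_smul_right _ _ hA]
  rw [eN, eA, eB, eC, eD]
  generalize tcomp 2 (p + m + n - 2) Mu (triFn p m n H F G) = a1
  generalize triFn p (m + 1) n H (tcomp m 2 F Mu) G = a2
  generalize triFn p m (n + 1) H F (tcomp n 2 G Mu) = a3
  generalize triFn p (m + 1) n H (tcomp 2 m Mu F) G = a4
  generalize triFn p m (n + 1) H F (tcomp 2 n Mu G) = a5
  generalize tcomp p (m + n) H (pcomp m n (pcomp 0 m Mu F) G) = a6
  generalize pcomp (p + m - 1) n (pcomp 0 (p + m - 1) Mu (tcomp p m H F)) G = a7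
  generalize pcomp (p + m - 1) n (pcomp 0 (p + m - 1) Mu (tcomp m p F H)) G = a8
  generalize pcomp m (p + n - 1) (pcomp 0 m Mu F) (tcomp p n H G) = a9
  generalize pcomp m (p + n - 1) (pcomp 0 m Mu F) (tcomp n p G H) = a10
  -- What remains is a linear identity whose signs depend only on the parities of `p`, `m`, `n`.
  by_cases hp : Even (p : ℤ) <;> by_cases hm : Even (m : ℤ) <;> by_cases hn : Even (n : ℤ) <;>
    simp only [sgn_eq_ite, Int.even_add, Int.even_sub, Int.even_mul, Nat.cast_add, Nat.cast_ofNat,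
      hp, hm, hn, Int.not_even_one, even_two, iff_true, iff_false, not_true,
      or_true, or_false, if_true, if_false, one_smul,
      neg_smul] <;> abel
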